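/- For every probabilistic finite automaton P, the reduction POMDP G with target set T={target} satisfies the following dichotomy: optCost in G equals -∞ if some finite word is accepted by P with probability strictly greater than 1/2, and optCost equals 1 otherwise. In particular, optCost ∈ {-∞, 1} for every POMDP arising from the reduction. -/

import Mathlib

open Finset Filter
open scoped Classical

noncomputable section

/-- A finite history of a play: the current state together with the
(reversed) list of past steps; an entry `(a, s')` means: the action `a`
was taken from the state `s'` (leading to the next recorded state). -/
abbrev Hist (S A : Type) := S × List (A × S)

/-- The observation–action sequence of a history. -/
def obsHist {S A Z : Type} (O : S → Z) (h : Hist S A) : Z × List (A × Z) :=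
  (O h.1, h.2.map fun p => (p.1, O p.2))

/-- An observation-based (randomized, history-dependent) strategy. -/
structure Strategy (S A Z : Type) [Fintype A] (O : S → Z) where
  act : Hist S A → A → ℝ
  act_nonneg : ∀ h a, 0 ≤ act h a
  act_sum : ∀ h, ∑ a, act h a = 1
  obsBased : ∀ h h', obsHist O h = obsHist O h' → act h = act h'

/-- A partially observable Markov decision process. -/
structure POMDP (S A Z : Type) [Fintype S] [Fintype A] [Fintype Z] where
  δ : S → A → S → ℝ
  δ_nonneg : ∀ s a s', 0 ≤ δ s a s'
  δ_sum : ∀ s a, ∑ s', δ s a s' = 1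
  obs : S → Z
  init : S → ℝ
  init_nonneg : ∀ s, 0 ≤ init s
  init_sum : ∑ s, init s = 1
  init_obs : ∀ s s', 0 < init s → 0 < init s' → obs s = obs s'

namespace POMDP

variable {S A Z : Type} [Fintype S] [Fintype A] [Fintype Z]

/-- The target set `T` consists of absorbing states. -/
def Absorbing (M : POMDP S A Z) (T : Set S) : Prop :=
  ∀ t ∈ T, ∀ a, M.δ t a t = 1

/-- Probability that after `n` steps the process has followed exactly the
history `(s, l)` (so `l` has length `n`). -/
def hprobAux (M : POMDP S A Z) (σ : Strategy S A Z M.obs) : ℕ → S → List (A × S) → ℝ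
  | 0, s, l => if l = [] then M.init s else 0
  | n+1, s, l =>
    match l with
    | [] => 0
    | (a, s') :: rest => hprobAux M σ n s' rest * σ.act (s', rest) a * M.δ s' a s

def hprob (M : POMDP S A Z) (σ : Strategy S A Z M.obs) (n : ℕ) (h : Hist S A) : ℝ :=
  M.hprobAux σ n h.1 h.2

/-- The state sequence of a history visits the set `T`. -/
def visitsT (T : Set S) (h : Hist S A) : Prop :=
  h.1 ∈ T ∨ ∃ p ∈ h.2, p.2 ∈ T

/-- Probability of reaching `T` within the first `n` steps. -/
def probReachBy (M : POMDP S A Z) (T : Set S) (σ : Strategy S A Z M.obs) (n : ℕ) : ℝ :=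
  ∑' h : Hist S A, if visitsT T h then M.hprob σ n h else 0

/-- Probability of the reachability objective `Reach(T)`. -/
def probReach (M : POMDP S A Z) (T : Set S) (σ : Strategy S A Z M.obs) : ℝ :=
  ⨆ n, M.probReachBy T σ n

/-- The strategy `σ` is almost-sure winning for `Reach(T)`. -/
def AlmostSure (M : POMDP S A Z) (T : Set S) (σ : Strategy S A Z M.obs) : Prop :=
  M.probReach T σ = 1

/-- Accumulated cost along a history. -/
def totalCostAux (c : S → A → ℝ) : S → List (A × S) → ℝ
  | _, [] => 0
  | _, (a, s') :: rest => totalCostAux c s' rest + c s' a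

def totalCostH (c : S → A → ℝ) (h : Hist S A) : ℝ := totalCostAux c h.1 h.2

/-- Expected total cost of the first `n` steps, i.e. `E[Total_{n-1}]`
(in particular `E[Total_k] = expTotalSteps M c σ (k+1)`). -/
def expTotalSteps (M : POMDP S A Z) (c : S → A → ℝ) (σ : Strategy S A Z M.obs) (n : ℕ) : ℝ :=
  ∑' h : Hist S A, M.hprob σ n h * totalCostH c h

/-- The value `Val(σ) = E[Total]` of a strategy, as the limit (limsup) of the
expected costs of the finite prefixes. -/
def Val (M : POMDP S A Z) (c : S → A → ℝ) (σ : Strategy S A Z M.obs) : EReal :=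
  Filter.limsup (fun n => ((M.expTotalSteps c σ n : ℝ) : EReal)) Filter.atTop

/-- `optCost`: the infimum of the values of almost-sure winning strategies. -/
def optCost (M : POMDP S A Z) (T : Set S) (c : S → A → ℝ) : EReal :=
  ⨅ σ : {σ : Strategy S A Z M.obs // M.AlmostSure T σ}, M.Val c σ.1

end POMDP

/-- A probabilistic finite automaton. -/
structure PFA (S A : Type) [Fintype S] [Fintype A] where
  δ : S → A → S → ℝ
  δ_nonneg : ∀ s a s', 0 ≤ δ s a s'
  δ_sum : ∀ s a, ∑ s', δ s a s' = 1
  final : Finset S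
  s0 : S

def dirac {X : Type} [DecidableEq X] (x : X) : X → ℝ := fun y => if y = x then 1 else 0

lemma dirac_nonneg {X : Type} [DecidableEq X] (x y : X) : 0 ≤ dirac x y := by
  unfold dirac; split_ifs <;> norm_num

lemma dirac_sum {X : Type} [Fintype X] [DecidableEq X] (x : X) : ∑ y, dirac x y = 1 := by
  simp [dirac]

namespace PFA

variable {S A : Type} [Fintype S] [Fintype A] [DecidableEq S] [DecidableEq A]

/-- One step of the forward distribution of the PFA. -/
def stepD (P : PFA S A) (d : S → ℝ) (a : A) : S → ℝ := fun s' => ∑ s, d s * P.δ s a s'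

/-- Distribution over states after reading the word `w` from `s0`. -/
def wordDist (P : PFA S A) (w : List A) : S → ℝ := w.foldl P.stepD (dirac P.s0)

/-- Probability that the word `w` is accepted (run ends in a final state). -/
def accProb (P : PFA S A) (w : List A) : ℝ := ∑ s ∈ P.final, P.wordDist w s

/-- States of the reduction POMDP: `(s,1)` = `inl (s, true)`, `(s,-1)` = `inl (s, false)`,
`good`, `bad`, `target`, `losing` = `inr 0,1,2,3`. -/
abbrev RSt (S : Type) := S × Bool ⊕ Fin 4

/-- Actions of the reduction POMDP: the PFA letters, and `# = inr 0`,
`$ = inr 1`, `√ = inr 2`. -/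
abbrev RAct (A : Type) := A ⊕ Fin 3

variable (S) in
def stGood : RSt S := Sum.inr 0
variable (S) in
def stBad : RSt S := Sum.inr 1
variable (S) in
def stTarget : RSt S := Sum.inr 2
variable (S) in
def stLosing : RSt S := Sum.inr 3

def embedPos (p : S → ℝ) : RSt S → ℝ
  | Sum.inl (s, true) => p s
  | Sum.inl (_, false) => 0
  | Sum.inr _ => 0

lemma embedPos_nonneg {p : S → ℝ} (hp : ∀ s, 0 ≤ p s) (t : RSt S) : 0 ≤ embedPos p t := by
  rcases t with ⟨s, _ | _⟩ | i <;> simp [embedPos] <;> exact hp s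

lemma embedPos_sum (p : S → ℝ) : ∑ t, embedPos p t = ∑ s, p s := by
  rw [Fintype.sum_sum_type, Fintype.sum_prod_type]
  have h1 : ∀ s : S, ∑ b : Bool, embedPos p (Sum.inl (s, b)) = p s := by
    intro s; rw [Fintype.sum_bool]; simp [embedPos]
  have h2 : ∑ i : Fin 4, embedPos p (Sum.inr i) = 0 := by
    simp [embedPos]
  rw [h2, Finset.sum_congr rfl fun s _ => h1 s, add_zero]

/-- Transition function of the reduction POMDP. -/
def redδ (P : PFA S A) : RSt S → RAct A → RSt S → ℝ
  | Sum.inl (s, true), Sum.inr j =>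
      if j = 1 then dirac (Sum.inl (s, false))
      else if j = 2 then (if s = P.s0 then dirac (stTarget S) else dirac (stLosing S))
      else dirac (stLosing S)
  | Sum.inl (_, true), Sum.inl _ => dirac (stLosing S)
  | Sum.inl (s, false), Sum.inl a => embedPos (P.δ s a)
  | Sum.inl (s, false), Sum.inr j =>
      if j = 0 then (if s ∈ P.final then dirac (stGood S) else dirac (stBad S))
      else dirac (stLosing S)
  | Sum.inr i, Sum.inl _ =>
      if i = 2 then dirac (stTarget S) else dirac (stLosing S)
  | Sum.inr i, Sum.inr j =>
      if i = 2 then dirac (stTarget S)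
      else if i = 3 then dirac (stLosing S)
      else if j = 0 then dirac (Sum.inl (P.s0, true)) else dirac (stLosing S)

lemma redδ_nonneg (P : PFA S A) (st : RSt S) (act : RAct A) (t : RSt S) :
    0 ≤ redδ P st act t := by
  rcases st with ⟨s, _ | _⟩ | i <;> rcases act with a | j <;>
    simp only [redδ] <;> (try split_ifs) <;>
    first
      | exact dirac_nonneg _ _
      | exact embedPos_nonneg (P.δ_nonneg s a) t

lemma redδ_sum (P : PFA S A) (st : RSt S) (act : RAct A) :
    ∑ t, redδ P st act t = 1 := by
  rcases st with ⟨s, _ | _⟩ | i <;> rcases act with a | j <;>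
    simp only [redδ] <;> (try split_ifs) <;>
    first
      | exact dirac_sum _
      | (rw [embedPos_sum]; exact P.δ_sum s a)

/-- The cost function of the reduction POMDP (cost of the source state,
charged on all outgoing transitions). -/
def costRed : RSt S → RAct A → ℝ
  | Sum.inl (_, true), _ => 1
  | Sum.inl (_, false), _ => -1
  | Sum.inr i, _ => if i = 0 then -1 else if i = 1 then 1 else if i = 3 then 1 else 0

/-- The reduction POMDP built from the PFA `P`: single observation,
initial state `(s0, 1)`. -/
def redPOMDP (P : PFA S A) : POMDP (RSt S) (RAct A) Unit where
  δ := redδ P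
  δ_nonneg := redδ_nonneg P
  δ_sum := redδ_sum P
  obs := fun _ => ()
  init := dirac (Sum.inl (P.s0, true))
  init_nonneg := dirac_nonneg _
  init_sum := dirac_sum _
  init_obs := fun _ _ _ _ => rfl

variable (S) in
/-- The target set of the reduction POMDP. -/
def TRed : Set (RSt S) := {stTarget S}

end PFA

/-- The memory state of a finite-memory strategy after a history. -/
def memAfter {S A Z Mem : Type} (O : S → Z) (σu : Mem → Z → A → Mem) (m0 : Mem) :
    S → List (A × S) → Mem
  | _, [] => m0
  | s, (a, s') :: rest => σu (memAfter O σu m0 s' rest) (O s) a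

/-- A strategy is pure finite-memory if it is induced by a deterministic
finite-memory structure `(σu, σn, Mem, m0)`. -/
def IsPureFinMem {S A Z : Type} [Fintype A] (O : S → Z) (σ : Strategy S A Z O) : Prop :=
  ∃ (Mem : Type) (_ : Finite Mem) (σu : Mem → Z → A → Mem) (σn : Mem → A) (m0 : Mem),
    ∀ (h : Hist S A) (a : A),
      σ.act h a = if a = σn (memAfter O σu m0 h.1 h.2) then 1 else 0

/-!
With a single observation every strategy is blind, so the state after an action word is distributed
according to a belief that depends on the word alone, and expected costs and reachability
probabilities are averages, over the action words played, of the corresponding quantities for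
beliefs.

In the reduction POMDP every belief is either the distribution of the automaton after reading some
word `w` (on the copies `(s,1)` or `(s,-1)`), or splits between `good` and `bad`, or splits between
`target` and `losing`. Reading letters costs nothing on balance, testing `w` and restarting costs
`1 - 2 * accProb w`, and a final `√` costs `1`. Hence a word accepted with probability above `1/2`
can be replayed often enough to push the cost below any bound before `√` is played. If no such word
exists, then whatever is played, the expected cost is at least the probability of having reached
`target`; this is an induction on the word, strengthened by a potential that adds the unit paid on
entering a copy `(s,-1)` and refunded on leaving it.
-/

namespace Hist

variable {S A : Type}

/-- The history obtained from `h` by playing `a` and moving to `s`. -/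
def extend (h : Hist S A) (a : A) (s : S) : Hist S A := (s, (a, h.1) :: h.2)

/-- The actions played along a history, latest first. -/
def actions (h : Hist S A) : List A := h.2.map Prod.fst

theorem actions_extend (h : Hist S A) (a : A) (s : S) :
    (h.extend a s).actions = a :: h.actions := rfl

theorem injective_uncurry_extend :
    Function.Injective fun p : Hist S A × A × S => p.1.extend p.2.1 p.2.2 := by
  rintro ⟨⟨s, l⟩, a, t⟩ ⟨⟨s', l'⟩, a', t'⟩ h
  simp_all [extend]

theorem visitsT_extend {T : Set S} (h : Hist S A) (a : A) (s : S) :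
    POMDP.visitsT T (h.extend a s) ↔ s ∈ T ∨ POMDP.visitsT T h := by
  simp [POMDP.visitsT, extend]

end Hist

namespace Strategy

variable {S A Z : Type} [Fintype A] {O : S → Z}

/-- A strategy is blind if its choices depend on the past actions only. -/
def IsBlind (σ : Strategy S A Z O) : Prop := Function.FactorsThrough σ.act Hist.actions

theorem isBlind_of_subsingleton [Subsingleton Z] (σ : Strategy S A Z O) : σ.IsBlind := by
  intro h h' hactions
  have hobs (k : Hist S A) :
      k.2.map (fun p => (p.1, O p.2)) = k.actions.map fun a => (a, O h.1) := by
    simp [Hist.actions, Function.comp_def, Subsingleton.elim _ (O h.1)]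
  exact σ.obsBased h h' (Prod.ext (Subsingleton.elim _ _) (by simp only [obsHist, hobs, hactions]))

/-- The strategy that plays the fixed sequence of actions `p`, whatever it observes. -/
def openLoop [DecidableEq A] (O : S → Z) (p : ℕ → A) : Strategy S A Z O where
  act h := dirac (p h.2.length)
  act_nonneg _ := dirac_nonneg _
  act_sum _ := dirac_sum _
  obsBased h h' hobs := by
    have hlength : h.2.length = h'.2.length := by
      simpa [obsHist] using congrArg (fun o => o.2.length) hobs
    rw [hlength]

theorem isBlind_openLoop [DecidableEq A] (p : ℕ → A) : (openLoop O p).IsBlind := by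
  intro h h' hactions
  have hlength : h.2.length = h'.2.length := by
    simpa [Hist.actions] using congrArg List.length hactions
  simp only [openLoop, hlength]

end Strategy

theorem sum_dirac_mul {X : Type} [Fintype X] [DecidableEq X] (x : X) (f : X → ℝ) :
    ∑ y, dirac x y * f y = f x := by
  simp [dirac]

theorem sum_ite_dirac_mul {X : Type} [Fintype X] [DecidableEq X] (p : Prop) [Decidable p]
    (x y : X) (f : X → ℝ) :
    ∑ z, (if p then dirac x else dirac y) z * f z = if p then f x else f y := by
  split_ifs <;> exact sum_dirac_mul _ f

namespace POMDP

variable {S A Z : Type} [Fintype S] [Fintype A] [Fintype Z]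

section Expectation

variable (M : POMDP S A Z) (σ : Strategy S A Z M.obs)

theorem length_eq_of_hprob_ne_zero {n : ℕ} {h : Hist S A} (hne : M.hprob σ n h ≠ 0) :
    h.2.length = n := by
  obtain ⟨s, l⟩ := h
  induction n generalizing s l with
  | zero => by_contra hl; exact hne (if_neg (mt List.length_eq_zero_iff.2 hl))
  | succ n ih =>
    rcases l with _ | ⟨⟨a, s'⟩, l⟩
    · exact absurd rfl hne
    · exact congrArg (· + 1) (ih s' l (left_ne_zero_of_mul (left_ne_zero_of_mul hne)))

theorem summable_hprob_mul (n : ℕ) (f : Hist S A → ℝ) :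
    Summable fun h => M.hprob σ n h * f h := by
  have hfinite : (Set.univ ×ˢ {l | l.length = n} : Set (Hist S A)).Finite :=
    Set.finite_univ.prod (List.finite_length_eq _ _)
  exact summable_of_hasFiniteSupport <| hfinite.subset fun h hh =>
    ⟨trivial, M.length_eq_of_hprob_ne_zero σ (left_ne_zero_of_mul hh)⟩

/-- The expectation of `f` on the history after `n` steps. -/
def histExp (n : ℕ) (f : Hist S A → ℝ) : ℝ := ∑' h, M.hprob σ n h * f h

/-- The conditional expectation of `f` on the next history, given the current one. -/
def stepExp (f : Hist S A → ℝ) (h : Hist S A) : ℝ :=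
  ∑ a, σ.act h a * ∑ s, M.δ h.1 a s * f (h.extend a s)

theorem histExp_zero (f : Hist S A → ℝ) : M.histExp σ 0 f = ∑ s, M.init s * f (s, []) := by
  have hinj : Function.Injective fun s : S => ((s, []) : Hist S A) := fun _ _ => congrArg Prod.fst
  have hsupp : (Function.support fun h => M.hprob σ 0 h * f h) ⊆
      Set.range fun s : S => ((s, []) : Hist S A) := by
    intro h hh
    have hnil := List.length_eq_zero_iff.1
      (M.length_eq_of_hprob_ne_zero σ (left_ne_zero_of_mul hh))
    exact ⟨h.1, Prod.ext rfl hnil.symm⟩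
  rw [histExp, ← hinj.tsum_eq hsupp, tsum_fintype]
  simp [hprob, hprobAux]

theorem histExp_succ (n : ℕ) (f : Hist S A → ℝ) :
    M.histExp σ (n + 1) f = M.histExp σ n (M.stepExp σ f) := by
  have hsupp : (Function.support fun h => M.hprob σ (n + 1) h * f h) ⊆
      Set.range fun p : Hist S A × A × S => p.1.extend p.2.1 p.2.2 := by
    rintro ⟨s, _ | ⟨⟨a, s'⟩, l⟩⟩ hh
    · exact absurd rfl (left_ne_zero_of_mul hh)
    · exact ⟨((s', l), a, s), rfl⟩
  have hsummable := (M.summable_hprob_mul σ (n + 1) f).comp_injective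
    Hist.injective_uncurry_extend
  calc M.histExp σ (n + 1) f
      = ∑' p : Hist S A × A × S,
          M.hprob σ (n + 1) (p.1.extend p.2.1 p.2.2) * f (p.1.extend p.2.1 p.2.2) :=
        (Hist.injective_uncurry_extend.tsum_eq hsupp).symm
    _ = ∑' h, ∑' q : A × S, M.hprob σ n h * σ.act h q.1 * M.δ h.1 q.1 q.2 * f (h.extend q.1 q.2) :=
        hsummable.tsum_prod
    _ = M.histExp σ n (M.stepExp σ f) := by
        simp only [histExp, stepExp, tsum_fintype, Fintype.sum_prod_type, mul_sum, mul_assoc]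

theorem histExp_add (n : ℕ) (f g : Hist S A → ℝ) :
    M.histExp σ n (fun h => f h + g h) = M.histExp σ n f + M.histExp σ n g := by
  simp only [histExp, mul_add]
  exact (M.summable_hprob_mul σ n f).tsum_add (M.summable_hprob_mul σ n g)

theorem stepExp_mono {f g : Hist S A → ℝ} {h : Hist S A}
    (hfg : ∀ a s, f (h.extend a s) ≤ g (h.extend a s)) : M.stepExp σ f h ≤ M.stepExp σ g h :=
  sum_le_sum fun a _ => mul_le_mul_of_nonneg_left
    (sum_le_sum fun s _ => mul_le_mul_of_nonneg_left (hfg a s) (M.δ_nonneg _ _ s))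
    (σ.act_nonneg h a)

theorem histExp_mono (n : ℕ) {f g : Hist S A → ℝ} (hfg : ∀ h, f h ≤ g h) :
    M.histExp σ n f ≤ M.histExp σ n g := by
  induction n generalizing f g with
  | zero =>
    simp only [histExp_zero]
    exact sum_le_sum fun s _ => mul_le_mul_of_nonneg_left (hfg _) (M.init_nonneg s)
  | succ n ih =>
    simp only [histExp_succ]
    exact ih fun h => M.stepExp_mono σ fun a s => hfg _

theorem stepExp_comp_actions (g : List A → ℝ) (h : Hist S A) :
    M.stepExp σ (fun h' => g h'.actions) h = ∑ a, σ.act h a * g (a :: h.actions) := by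
  simp only [stepExp, Hist.actions_extend, ← sum_mul, M.δ_sum, one_mul]

theorem stepExp_const (c : ℝ) (h : Hist S A) : M.stepExp σ (fun _ => c) h = c := by
  rw [M.stepExp_comp_actions σ fun _ => c, ← sum_mul, σ.act_sum, one_mul]

theorem histExp_const (n : ℕ) (c : ℝ) : M.histExp σ n (fun _ => c) = c := by
  induction n with
  | zero => rw [histExp_zero, ← sum_mul, M.init_sum, one_mul]
  | succ n ih => rw [histExp_succ, funext (M.stepExp_const σ c), ih]

theorem stepExp_totalCostH (c : S → A → ℝ) (h : Hist S A) :
    M.stepExp σ (totalCostH c) h = totalCostH c h + ∑ a, σ.act h a * c h.1 a := by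
  have hextend (a : A) (s : S) : totalCostH c (h.extend a s) = totalCostH c h + c h.1 a := rfl
  simp only [stepExp, hextend, ← sum_mul, M.δ_sum, one_mul, mul_add, sum_add_distrib, σ.act_sum]

end Expectation

section Reachability

variable (M : POMDP S A Z) (T : Set S) (σ : Strategy S A Z M.obs)

theorem probReachBy_eq_histExp (n : ℕ) :
    M.probReachBy T σ n = M.histExp σ n ({h | visitsT T h}.indicator 1) := by
  simp only [probReachBy, histExp, Set.indicator_apply, Set.mem_ofPred_eq, Pi.one_apply,
    mul_ite, mul_one, mul_zero]

theorem probReachBy_le_one (n : ℕ) : M.probReachBy T σ n ≤ 1 := by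
  rw [probReachBy_eq_histExp, ← M.histExp_const σ n 1]
  exact M.histExp_mono σ n (Set.indicator_le_self' fun _ _ => zero_le_one)

theorem monotone_probReachBy : Monotone (M.probReachBy T σ) := by
  refine monotone_nat_of_le_succ fun n => ?_
  simp only [probReachBy_eq_histExp, histExp_succ]
  refine M.histExp_mono σ n fun h => ?_
  rw [← M.stepExp_const σ ({h | visitsT T h}.indicator 1 h) h]
  refine M.stepExp_mono σ fun a s => ?_
  by_cases hh : visitsT T h
  · have hvisits : visitsT T (h.extend a s) := (h.visitsT_extend a s).2 (.inr hh)
    simp only [Set.indicator_apply, Set.mem_ofPred_eq, hh, hvisits, if_true, Pi.one_apply, le_refl]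
  · rw [Set.indicator_of_notMem (s := {h | visitsT T h}) hh]
    exact Set.indicator_apply_nonneg fun _ => zero_le_one

theorem tendsto_probReachBy :
    Tendsto (M.probReachBy T σ) atTop (nhds (M.probReach T σ)) :=
  tendsto_atTop_ciSup (M.monotone_probReachBy T σ)
    ⟨1, Set.forall_mem_range.2 (M.probReachBy_le_one T σ)⟩

theorem probReach_le_Val {c : S → A → ℝ}
    (hle : ∀ n, M.probReachBy T σ n ≤ M.expTotalSteps c σ n) :
    (M.probReach T σ : EReal) ≤ M.Val c σ := by
  rw [← ((continuous_coe_real_ereal.tendsto _).comp (M.tendsto_probReachBy T σ)).limsup_eq]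
  exact limsup_le_limsup (.of_forall fun n => EReal.coe_le_coe_iff.2 (hle n))

variable {M T}

theorem Absorbing.δ_eq_zero (hT : M.Absorbing T) {s s' : S} (hs : s ∈ T) (hs' : s' ∉ T) (a : A) :
    M.δ s a s' = 0 := by
  have hne : s ≠ s' := fun h => hs' (h ▸ hs)
  have hpair : ∑ t ∈ {s, s'}, M.δ s a t ≤ ∑ t, M.δ s a t :=
    sum_le_univ_sum_of_nonneg (M.δ_nonneg s a)
  rw [sum_pair hne, hT s hs, M.δ_sum] at hpair
  exact le_antisymm (by linarith) (M.δ_nonneg s a s')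

variable {σ}

theorem Absorbing.mem_of_visitsT (hT : M.Absorbing T) {n : ℕ} {h : Hist S A}
    (hne : M.hprob σ n h ≠ 0) (hvisits : visitsT T h) : h.1 ∈ T := by
  obtain ⟨s, l⟩ := h
  induction n generalizing s l with
  | zero =>
    obtain rfl : l = [] := List.length_eq_zero_iff.1 (M.length_eq_of_hprob_ne_zero σ hne)
    simpa [visitsT] using hvisits
  | succ n ih =>
    rcases l with _ | ⟨⟨a, s'⟩, l⟩
    · exact absurd rfl hne
    rcases (Hist.visitsT_extend (s', l) a s).1 hvisits with hs | hprev
    · exact hs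
    have hs' : s' ∈ T := ih s' l (left_ne_zero_of_mul (left_ne_zero_of_mul hne)) hprev
    by_contra hs
    exact right_ne_zero_of_mul hne (hT.δ_eq_zero hs' hs a)

theorem Absorbing.probReachBy_eq_histExp (hT : M.Absorbing T) (n : ℕ) :
    M.probReachBy T σ n = M.histExp σ n (fun h => T.indicator 1 h.1) := by
  refine tsum_congr fun h => ?_
  by_cases hne : M.hprob σ n h = 0
  · simp [hne]
  · have hiff : visitsT T h ↔ h.1 ∈ T := ⟨hT.mem_of_visitsT hne, .inl⟩
    simp [Set.indicator_apply, hiff]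

end Reachability

section Belief

variable (M : POMDP S A Z)

/-- The distribution of the current state given the past actions `u`, listed latest first, for an
agent that ignores all observations. -/
def belief : List A → S → ℝ
  | [] => M.init
  | a :: u => fun s' => ∑ s, belief u s * M.δ s a s'

/-- The expectation of `f` under the belief after the actions `u`. -/
def beliefExp (u : List A) (f : S → ℝ) : ℝ := ∑ s, M.belief u s * f s

/-- The expected total cost of the actions `u`, listed latest first, played blindly. -/
def beliefCost (c : S → A → ℝ) : List A → ℝ
  | [] => 0
  | a :: u => beliefCost c u + M.beliefExp u fun s => c s a

theorem beliefExp_cons (a : A) (u : List A) (f : S → ℝ) :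
    M.beliefExp (a :: u) f = M.beliefExp u fun s => ∑ s', M.δ s a s' * f s' := by
  simp only [beliefExp, belief, sum_mul, mul_sum, mul_assoc]
  exact sum_comm

theorem beliefExp_one (u : List A) : M.beliefExp u (fun _ => 1) = 1 := by
  induction u with
  | nil => simpa only [beliefExp, belief, mul_one] using M.init_sum
  | cons a u ih => simpa only [beliefExp_cons, mul_one, M.δ_sum] using ih

theorem beliefExp_sum_mul (u : List A) (x : A → ℝ) (f : A → S → ℝ) :
    M.beliefExp u (fun s => ∑ a, x a * f a s) = ∑ a, x a * M.beliefExp u (f a) := by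
  simp only [beliefExp, mul_sum]
  rw [sum_comm]
  exact sum_congr rfl fun _ _ => sum_congr rfl fun _ _ => mul_left_comm _ _ _

variable {M}
variable {σ : Strategy S A Z M.obs}

/-- Tower property: under a blind strategy, the belief is the conditional law of the current state
given the past actions. -/
theorem histExp_eq_histExp_beliefExp (hσ : σ.IsBlind) (n : ℕ) (g : List A → S → ℝ) :
    M.histExp σ n (fun h => g h.actions h.1) =
      M.histExp σ n (fun h => M.beliefExp h.actions (g h.actions)) := by
  obtain ⟨τ, hτ⟩ := (Function.factorsThrough_iff _).1 hσ
  induction n generalizing g with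
  | zero =>
    have hnil (s : S) : Hist.actions ((s, []) : Hist S A) = [] := rfl
    simp only [histExp_zero, hnil, ← sum_mul, M.init_sum, one_mul]
    rfl
  | succ n ih =>
    let g' (u : List A) (s : S) : ℝ := ∑ a, τ u a * ∑ s', M.δ s a s' * g (a :: u) s'
    have hstep (h : Hist S A) : M.stepExp σ (fun h => g h.actions h.1) h = g' h.actions h.1 := by
      simp only [g', stepExp, hτ, Function.comp_apply, Hist.actions_extend]
      rfl
    have hbelief (h : Hist S A) : M.beliefExp h.actions (g' h.actions) =
        M.stepExp σ (fun h => M.beliefExp h.actions (g h.actions)) h := by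
      rw [M.stepExp_comp_actions σ fun u => M.beliefExp u (g u)]
      simp only [g', beliefExp_sum_mul, ← beliefExp_cons, hτ, Function.comp_apply]
    rw [histExp_succ, histExp_succ, funext hstep, ih g', funext hbelief]

theorem expTotalSteps_eq_histExp_beliefCost (hσ : σ.IsBlind) (c : S → A → ℝ) (n : ℕ) :
    M.expTotalSteps c σ n = M.histExp σ n (fun h => M.beliefCost c h.actions) := by
  obtain ⟨τ, hτ⟩ := (Function.factorsThrough_iff _).1 hσ
  change M.histExp σ n (totalCostH c) = _
  induction n with
  | zero => rw [histExp_zero, histExp_zero]; rfl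
  | succ n ih =>
    have hstep (h : Hist S A) : M.stepExp σ (fun h => M.beliefCost c h.actions) h =
        M.beliefCost c h.actions + M.beliefExp h.actions fun s => ∑ a, τ h.actions a * c s a := by
      rw [stepExp_comp_actions]
      simp only [beliefCost, mul_add, sum_add_distrib, ← sum_mul, σ.act_sum, one_mul,
        beliefExp_sum_mul]
      simp only [hτ, Function.comp_apply]
    have htotal (h : Hist S A) : M.stepExp σ (totalCostH c) h =
        totalCostH c h + ∑ a, τ h.actions a * c h.1 a := by
      rw [stepExp_totalCostH, hτ, Function.comp_apply]
    rw [histExp_succ, histExp_succ, funext htotal, funext hstep, histExp_add, histExp_add, ih,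
      histExp_eq_histExp_beliefExp hσ n fun u s => ∑ a, τ u a * c s a]

theorem Absorbing.probReachBy_eq_histExp_beliefExp {T : Set S} (hT : M.Absorbing T)
    (hσ : σ.IsBlind) (n : ℕ) :
    M.probReachBy T σ n = M.histExp σ n (fun h => M.beliefExp h.actions (T.indicator 1)) := by
  rw [hT.probReachBy_eq_histExp, histExp_eq_histExp_beliefExp hσ n fun _ => T.indicator 1]

end Belief

section BlindBounds

variable {M : POMDP S A Z} {T : Set S} {c : S → A → ℝ}

theorem one_le_optCost_of_beliefExp_le_beliefCost [Subsingleton Z] (hT : M.Absorbing T)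
    (hle : ∀ u, M.beliefExp u (T.indicator 1) ≤ M.beliefCost c u) : 1 ≤ M.optCost T c := by
  refine le_iInf fun ⟨σ, hσ⟩ => ?_
  have hreach : M.probReach T σ = 1 := hσ
  have hstep (n : ℕ) : M.probReachBy T σ n ≤ M.expTotalSteps c σ n := by
    rw [hT.probReachBy_eq_histExp_beliefExp σ.isBlind_of_subsingleton,
      expTotalSteps_eq_histExp_beliefCost σ.isBlind_of_subsingleton]
    exact M.histExp_mono σ n fun h => hle h.actions
  simpa only [hreach, EReal.coe_one] using M.probReach_le_Val T σ hstep

theorem histExp_openLoop [DecidableEq A] (p : ℕ → A) (n : ℕ) (g : List A → ℝ) :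
    M.histExp (.openLoop M.obs p) n (fun h => g h.actions) =
      g ((List.range n).map p).reverse := by
  induction n generalizing g with
  | zero => simp [histExp_zero, Hist.actions, ← sum_mul, M.init_sum]
  | succ n ih =>
    have hstep (h : Hist S A) : M.stepExp (.openLoop M.obs p) (fun h => g h.actions) h =
        g (p h.actions.length :: h.actions) := by
      rw [stepExp_comp_actions]
      simpa [Strategy.openLoop, Hist.actions] using
        sum_dirac_mul (p h.2.length) fun a => g (a :: h.actions)
    rw [histExp_succ, funext hstep, ih fun u => g (p u.length :: u)]
    simp [List.range_succ]

theorem Absorbing.belief_cons_eq_zero (hT : M.Absorbing T) {u : List A}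
    (hu : ∀ s ∉ T, M.belief u s = 0) (a : A) {s : S} (hs : s ∉ T) : M.belief (a :: u) s = 0 := by
  refine sum_eq_zero fun s' _ => ?_
  by_cases hs' : s' ∈ T
  · rw [hT.δ_eq_zero hs' hs, mul_zero]
  · rw [hu s' hs', zero_mul]

theorem beliefCost_cons_of_belief_eq_zero (hc : ∀ t ∈ T, ∀ a, c t a = 0) {u : List A}
    (hu : ∀ s ∉ T, M.belief u s = 0) (a : A) : M.beliefCost c (a :: u) = M.beliefCost c u := by
  rw [beliefCost, add_eq_left]
  refine sum_eq_zero fun s _ => ?_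
  by_cases hs : s ∈ T
  · simp only [hc s hs, mul_zero]
  · rw [hu s hs, zero_mul]

theorem beliefExp_indicator_of_belief_eq_zero {u : List A} (hu : ∀ s ∉ T, M.belief u s = 0) :
    M.beliefExp u (T.indicator 1) = 1 := by
  rw [← M.beliefExp_one u]
  refine sum_congr rfl fun s _ => ?_
  by_cases hs : s ∈ T
  · rw [Set.indicator_of_mem hs, Pi.one_apply]
  · rw [hu s hs, zero_mul, zero_mul]

theorem optCost_le_beliefCost [Nonempty A] (hT : M.Absorbing T) (hc : ∀ t ∈ T, ∀ a, c t a = 0)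
    {u : List A} (hu : ∀ s ∉ T, M.belief u s = 0) : M.optCost T c ≤ (M.beliefCost c u : ℝ) := by
  let p (n : ℕ) : A := u.reverse.getD n (Classical.arbitrary A)
  let played (n : ℕ) : List A := ((List.range n).map p).reverse
  let σ : Strategy S A Z M.obs := .openLoop M.obs p
  have hσ : σ.IsBlind := Strategy.isBlind_openLoop p
  have hplayed : played u.length = u := by
    rw [List.reverse_eq_iff]
    exact List.ext_getElem (by simp) (by simp +contextual [p])
  have hafter (n : ℕ) (hn : u.length ≤ n) : (∀ s ∉ T, M.belief (played n) s = 0) ∧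
      M.beliefCost c (played n) = M.beliefCost c u := by
    induction n, hn using Nat.le_induction with
    | base => rw [hplayed]; exact ⟨hu, rfl⟩
    | succ n _ ih =>
      have hsucc : played (n + 1) = p n :: played n := by simp [played, List.range_succ]
      rw [hsucc]
      exact ⟨fun s => hT.belief_cons_eq_zero ih.1 (p n),
        (beliefCost_cons_of_belief_eq_zero hc ih.1 (p n)).trans ih.2⟩
  have hreach : M.AlmostSure T σ := by
    refine tendsto_nhds_unique (M.tendsto_probReachBy T σ) (tendsto_atTop_of_eventually_const
      (i₀ := u.length) fun n hn => ?_)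
    rw [hT.probReachBy_eq_histExp_beliefExp hσ,
      histExp_openLoop p n fun u => M.beliefExp u (T.indicator 1)]
    exact beliefExp_indicator_of_belief_eq_zero (hafter n hn).1
  have hval : M.Val c σ = (M.beliefCost c u : ℝ) := by
    refine (tendsto_atTop_of_eventually_const (i₀ := u.length) fun n hn => ?_).limsup_eq
    rw [expTotalSteps_eq_histExp_beliefCost hσ, histExp_openLoop, (hafter n hn).2]
  exact hval ▸ iInf_le (fun σ : {σ // M.AlmostSure T σ} => M.Val c σ.1) ⟨σ, hreach⟩

end BlindBounds

end POMDP

namespace PFA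

section WordDist

variable {S A : Type} [Fintype S] [Fintype A] [DecidableEq S] (P : PFA S A)

theorem wordDist_append_singleton (w : List A) (a : A) :
    P.wordDist (w ++ [a]) = P.stepD (P.wordDist w) a :=
  List.foldl_concat ..

theorem wordDist_nonneg (w : List A) (s : S) : 0 ≤ P.wordDist w s := by
  induction w using List.reverseRecOn generalizing s with
  | nil => exact dirac_nonneg _ _
  | append_singleton w a ih =>
    rw [wordDist_append_singleton]
    exact sum_nonneg fun s' _ => mul_nonneg (ih s') (P.δ_nonneg _ _ _)

theorem sum_wordDist (w : List A) : ∑ s, P.wordDist w s = 1 := by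
  induction w using List.reverseRecOn with
  | nil => exact dirac_sum _
  | append_singleton w a ih =>
    simp only [wordDist_append_singleton, stepD]
    rw [sum_comm]
    simp only [← mul_sum, P.δ_sum, mul_one, ih]

theorem wordDist_mem_unitInterval (w : List A) (s : S) : P.wordDist w s ∈ unitInterval :=
  ⟨P.wordDist_nonneg w s,
    P.sum_wordDist w ▸ single_le_sum (fun s _ => P.wordDist_nonneg w s) (mem_univ s)⟩

theorem sum_wordDist_mul_ite (w : List A) (p : S → Prop) [DecidablePred p] (x y : ℝ) :
    ∑ s, P.wordDist w s * (if p s then x else y) =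
      (∑ s with p s, P.wordDist w s) * x + (1 - ∑ s with p s, P.wordDist w s) * y := by
  have hsplit := sum_filter_add_sum_filter_not univ p (P.wordDist w)
  rw [sum_wordDist] at hsplit
  simp only [mul_ite, sum_ite, ← sum_mul, ← hsplit, add_sub_cancel_left]

end WordDist

theorem sum_embedPos_mul {S : Type} [Fintype S] (p : S → ℝ) (f : RSt S → ℝ) :
    ∑ t, embedPos p t * f t = ∑ s, p s * f (.inl (s, true)) := by
  simp [Fintype.sum_sum_type, Fintype.sum_prod_type, embedPos]

/-- The forms taken by the beliefs of the reduction POMDP. `running w` and `paused w`: the state of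
the automaton after reading `w`, on the copies `(s,1)` and `(s,-1)`; `judged w`: `good` with the
acceptance probability of `w`, else `bad`; `halted p`: `target` with probability `p`, else
`losing`. -/
inductive BeliefForm (A : Type)
  | running (w : List A)
  | paused (w : List A)
  | judged (w : List A)
  | halted (p : unitInterval)

namespace BeliefForm

variable {S A : Type} [Fintype S] [Fintype A] [DecidableEq S] (P : PFA S A)

/-- The expectation of `f` under a belief of the given form. -/
def mean : BeliefForm A → (RSt S → ℝ) → ℝ
  | running w, f => ∑ s, P.wordDist w s * f (.inl (s, true))
  | paused w, f => ∑ s, P.wordDist w s * f (.inl (s, false))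
  | judged w, f => P.accProb w * f (stGood S) + (1 - P.accProb w) * f (stBad S)
  | halted p, f => p * f (stTarget S) + (1 - p) * f (stLosing S)

/-- The update of a belief form by an action. -/
def next : BeliefForm A → RAct A → BeliefForm A
  | running w, .inr 1 => paused w
  | running w, .inr 2 => halted ⟨P.wordDist w P.s0, P.wordDist_mem_unitInterval w P.s0⟩
  | paused w, .inl a => running (w ++ [a])
  | paused w, .inr 0 => judged w
  | judged _, .inr 0 => running []
  | halted p, _ => halted p
  | _, _ => halted 0

/-- The expected cost of one step from a belief of the given form. -/
def stageCost : BeliefForm A → ℝ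
  | running _ => 1
  | paused _ => -1
  | judged w => 1 - 2 * P.accProb w
  | halted p => 1 - p

theorem mean_costRed (b : BeliefForm A) (a : RAct A) :
    b.mean P (fun s => costRed s a) = b.stageCost P := by
  cases b with
  | running w => simp [mean, stageCost, costRed, sum_wordDist]
  | paused w => simp [mean, stageCost, costRed, sum_wordDist]
  | judged w =>
    simp only [mean, stageCost, costRed, stGood, stBad, if_true, one_ne_zero, if_false]
    ring
  | halted p => simp [mean, stageCost, costRed, stTarget, stLosing]

theorem mean_next_running (w : List A) (a : RAct A) (f : RSt S → ℝ) :
    ((running w).next P a).mean P f =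
      (running w).mean P fun s => ∑ s', P.redδ s a s' * f s' := by
  match a with
  | .inl _ => simp [mean, next, redδ, sum_dirac_mul, ← sum_mul, sum_wordDist]
  | .inr 0 => simp [mean, next, redδ, sum_dirac_mul, ← sum_mul, sum_wordDist]
  | .inr 1 => simp [mean, next, redδ, sum_dirac_mul]
  | .inr 2 =>
    simp [mean, next, redδ, sum_ite_dirac_mul, sum_wordDist_mul_ite, filter_eq', -mul_ite]

theorem mean_next_paused (w : List A) (a : RAct A) (f : RSt S → ℝ) :
    ((paused w).next P a).mean P f =
      (paused w).mean P fun s => ∑ s', P.redδ s a s' * f s' := by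
  match a with
  | .inl a =>
    simp only [mean, next, redδ, sum_embedPos_mul, wordDist_append_singleton, stepD, sum_mul,
      mul_sum, mul_assoc]
    exact sum_comm
  | .inr 0 =>
    simp [mean, next, redδ, sum_ite_dirac_mul, sum_wordDist_mul_ite, accProb, -mul_ite]
  | .inr 1 => simp [mean, next, redδ, sum_dirac_mul, ← sum_mul, sum_wordDist]
  | .inr 2 => simp [mean, next, redδ, sum_dirac_mul, ← sum_mul, sum_wordDist]

theorem mean_next_judged (w : List A) (a : RAct A) (f : RSt S → ℝ) :
    ((judged w).next P a).mean P f =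
      (judged w).mean P fun s => ∑ s', P.redδ s a s' * f s' := by
  match a with
  | .inl _ => simp [mean, next, redδ, sum_dirac_mul, stGood, stBad, ← add_mul]
  | .inr 0 =>
    simp [mean, next, redδ, sum_dirac_mul, stGood, stBad, wordDist, ← add_mul]
  | .inr 1 => simp [mean, next, redδ, sum_dirac_mul, stGood, stBad, ← add_mul]
  | .inr 2 => simp [mean, next, redδ, sum_dirac_mul, stGood, stBad, ← add_mul]

theorem mean_next_halted (p : unitInterval) (a : RAct A) (f : RSt S → ℝ) :
    ((halted p : BeliefForm A).next P a).mean P f =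
      (halted p : BeliefForm A).mean P fun s => ∑ s', P.redδ s a s' * f s' := by
  rcases a with a | j <;> simp [mean, next, redδ, sum_dirac_mul, stTarget, stLosing]

theorem mean_next (b : BeliefForm A) (a : RAct A) (f : RSt S → ℝ) :
    (b.next P a).mean P f = b.mean P fun s => ∑ s', P.redδ s a s' * f s' :=
  match b with
  | running w => mean_next_running P w a f
  | paused w => mean_next_paused P w a f
  | judged w => mean_next_judged P w a f
  | halted p => mean_next_halted P p a f

/-- A lower bound on the cost paid before reaching a belief of the given form when no word is
accepted with probability above `1/2`: every step raises it by at most the stage cost. -/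
def potential : BeliefForm A → ℝ
  | running _ => 0
  | paused _ => 1
  | judged _ => 0
  | halted p => p

theorem potential_next_le (hP : ∀ w, P.accProb w ≤ 1 / 2) (b : BeliefForm A) (a : RAct A) :
    (b.next P a).potential ≤ b.potential + b.stageCost P := by
  rcases b with w | w | w | p
  · have hrunning : (running w : BeliefForm A).potential + (running w).stageCost P = 1 := zero_add 1
    rw [hrunning]
    match a with
    | .inl _ | .inr 0 => exact zero_le_one
    | .inr 1 => exact le_rfl
    | .inr 2 => exact (P.wordDist_mem_unitInterval w P.s0).2
  · have hpaused : (paused w : BeliefForm A).potential + (paused w).stageCost P = 0 :=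
      add_neg_cancel 1
    rw [hpaused]
    match a with
    | .inl _ | .inr 0 | .inr 1 | .inr 2 => exact le_rfl
  · have hjudged : 0 ≤ (judged w : BeliefForm A).potential + (judged w).stageCost P := by
      simp only [potential, stageCost]
      linarith [hP w]
    match a with
    | .inl _ | .inr 0 | .inr 1 | .inr 2 => exact hjudged
  · have hhalted : (halted p : BeliefForm A).potential + (halted p).stageCost P = 1 :=
      add_sub_cancel _ _
    rw [hhalted]
    exact p.2.2

theorem mean_indicator_TRed_le_potential (b : BeliefForm A) :
    b.mean P ((TRed S).indicator 1) ≤ b.potential := by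
  cases b <;> simp [mean, potential, TRed, stGood, stBad, stTarget, stLosing]

end BeliefForm

open BeliefForm

section Reduction

variable {S A : Type} [Fintype S] [Fintype A] [DecidableEq S] (P : PFA S A)

/-- The form of the belief of the reduction POMDP after the actions `u`, listed latest first. -/
def beliefForm (u : List (RAct A)) : BeliefForm A :=
  u.foldr (fun a b => b.next P a) (running [])

theorem beliefExp_redPOMDP (u : List (RAct A)) (f : RSt S → ℝ) :
    (redPOMDP P).beliefExp u f = (P.beliefForm u).mean P f := by
  induction u generalizing f with
  | nil => exact (sum_dirac_mul _ _).trans (sum_dirac_mul P.s0 fun s => f (.inl (s, true))).symm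
  | cons a u ih =>
    rw [POMDP.beliefExp_cons, ih]
    exact (mean_next P _ a f).symm

theorem beliefCost_redPOMDP_cons (a : RAct A) (u : List (RAct A)) :
    (redPOMDP P).beliefCost costRed (a :: u) =
      (redPOMDP P).beliefCost costRed u + (P.beliefForm u).stageCost P := by
  rw [POMDP.beliefCost, beliefExp_redPOMDP, mean_costRed]

theorem absorbing_TRed : (redPOMDP P).Absorbing (TRed S) := by
  rintro _ rfl (a | j) <;> simp [redPOMDP, redδ, stTarget, dirac]

theorem potential_le_beliefCost (hP : ∀ w, P.accProb w ≤ 1 / 2) (u : List (RAct A)) :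
    (P.beliefForm u).potential ≤ (redPOMDP P).beliefCost costRed u := by
  induction u with
  | nil => exact le_rfl
  | cons a u ih =>
    rw [beliefCost_redPOMDP_cons]
    exact (potential_next_le P hP _ a).trans (add_le_add_left ih _)

theorem one_le_optCost_redPOMDP (hP : ∀ w, P.accProb w ≤ 1 / 2) :
    1 ≤ (redPOMDP P).optCost (TRed S) costRed := by
  refine POMDP.one_le_optCost_of_beliefExp_le_beliefCost P.absorbing_TRed fun u => ?_
  rw [beliefExp_redPOMDP]
  exact (mean_indicator_TRed_le_potential P _).trans (P.potential_le_beliefCost hP u)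

/-- Some action sequence leads to a belief of the form `b` at expected cost `c`. -/
def Attains (b : BeliefForm A) (c : ℝ) : Prop :=
  ∃ u, P.beliefForm u = b ∧ (redPOMDP P).beliefCost costRed u = c

theorem attains_running_nil : P.Attains (running []) 0 := ⟨[], rfl, rfl⟩

variable {P}

namespace Attains

theorem next {b : BeliefForm A} {c : ℝ} (h : P.Attains b c) (a : RAct A) :
    P.Attains (b.next P a) (c + b.stageCost P) := by
  obtain ⟨u, rfl, rfl⟩ := h
  exact ⟨a :: u, rfl, P.beliefCost_redPOMDP_cons a u⟩

theorem read {c : ℝ} (h : P.Attains (running []) c) (w : List A) :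
    P.Attains (running w) c := by
  induction w using List.reverseRecOn with
  | nil => exact h
  | append_singleton w a ih =>
    have hread := (ih.next (.inr 1)).next (.inl a)
    exact add_neg_cancel_right c 1 ▸ hread

theorem round {c : ℝ} (h : P.Attains (running []) c) (w : List A) :
    P.Attains (running []) (c + (1 - 2 * P.accProb w)) := by
  have hjudged := ((h.read w).next (.inr 1)).next (.inr 0)
  exact add_neg_cancel_right c 1 ▸ hjudged.next (.inr 0)

theorem halt {c : ℝ} (h : P.Attains (running []) c) :
    P.Attains (halted 1) (c + 1) := by
  have hs0 : P.wordDist [] P.s0 = 1 := if_pos rfl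
  have hone : (⟨P.wordDist [] P.s0, P.wordDist_mem_unitInterval [] P.s0⟩ : unitInterval) = 1 :=
    Subtype.ext hs0
  exact hone ▸ h.next (.inr 2)

theorem optCost_le {c : ℝ} (h : P.Attains (halted 1) c) :
    (redPOMDP P).optCost (TRed S) costRed ≤ c := by
  obtain ⟨u, hu, rfl⟩ := h
  refine POMDP.optCost_le_beliefCost P.absorbing_TRed ?_ fun s hs => ?_
  · rintro _ rfl a
    simp [costRed, stTarget]
  · have hne : stTarget S ≠ s := fun h => hs h.symm
    have hbelief : (redPOMDP P).beliefExp u (Pi.single s 1) = (redPOMDP P).belief u s := by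
      simp [POMDP.beliefExp, Pi.single_apply]
    rw [← hbelief, beliefExp_redPOMDP, hu]
    simp [mean, hne]

end Attains

variable (P)

theorem attains_rounds (w : List A) (k : ℕ) :
    P.Attains (running []) (k * (1 - 2 * P.accProb w)) := by
  induction k with
  | zero => simpa using P.attains_running_nil
  | succ k ih => simpa [add_mul] using ih.round w

theorem optCost_redPOMDP_eq_bot {w : List A} (hw : 1 / 2 < P.accProb w) :
    (redPOMDP P).optCost (TRed S) costRed = ⊥ := by
  refine EReal.eq_bot_iff_forall_lt _ |>.2 fun y => ?_
  have hgain : 0 < 2 * P.accProb w - 1 := by linarith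
  obtain ⟨k, hk⟩ := exists_nat_gt ((1 - y) / (2 * P.accProb w - 1))
  have hlt : (k : ℝ) * (1 - 2 * P.accProb w) + 1 < y := by
    linarith [(div_lt_iff₀ hgain).1 hk]
  exact (P.attains_rounds w k).halt.optCost_le.trans_lt (EReal.coe_lt_coe_iff.2 hlt)

theorem optCost_redPOMDP_eq_one (hP : ∀ w, P.accProb w ≤ 1 / 2) :
    (redPOMDP P).optCost (TRed S) costRed = 1 := by
  refine le_antisymm ?_ (P.one_le_optCost_redPOMDP hP)
  simpa using P.attains_running_nil.halt.optCost_le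

end Reduction

end PFA

/-- The dichotomy for the reduction POMDP: the optimal cost is
`-∞` if some word is accepted with probability `> 1/2`, and `1` otherwise;
in particular it always lies in `{-∞, 1}`. -/
theorem optCost_dichotomy
    {S A : Type} [Fintype S] [Fintype A] [DecidableEq S] [DecidableEq A]
    (P : PFA S A) :
    ((∃ w : List A, 1 / 2 < P.accProb w) →
      (PFA.redPOMDP P).optCost (PFA.TRed S) PFA.costRed = ⊥) ∧
    ((¬ ∃ w : List A, 1 / 2 < P.accProb w) →
      (PFA.redPOMDP P).optCost (PFA.TRed S) PFA.costRed = (1 : EReal)) ∧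
    (PFA.redPOMDP P).optCost (PFA.TRed S) PFA.costRed ∈ ({⊥, 1} : Set EReal) := by
  have hbot : (∃ w : List A, 1 / 2 < P.accProb w) →
      (PFA.redPOMDP P).optCost (PFA.TRed S) PFA.costRed = ⊥ := fun ⟨_, hw⟩ =>
    P.optCost_redPOMDP_eq_bot hw
  have hone : (¬ ∃ w : List A, 1 / 2 < P.accProb w) →
      (PFA.redPOMDP P).optCost (PFA.TRed S) PFA.costRed = 1 := fun hw =>
    P.optCost_redPOMDP_eq_one fun w => not_lt.1 fun h => hw ⟨w, h⟩
  refine ⟨hbot, hone, ?_⟩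
  by_cases hw : ∃ w : List A, 1 / 2 < P.accProb w
  · exact .inl (hbot hw)
  · exact .inr (hone hw)
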